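/- Let d ≥ 1 and let X₁,…,X_N and Y₁,…,Y_N be 2N independent random points that are uniformly distributed in [0,1]^d, and let L_N = L_MBM(X₁,…,X_N; Y₁,…,Y_N). Then for every t > 0, P( | L_N/N^{1-1/d} − E(L_N/N^{1-1/d}) | > t ) ≤ 2 exp( − N^{1-2/d} t² / (8d) ). -/

import Mathlib

open MeasureTheory ProbabilityTheory Filter

noncomputable section

/-- The unit cube `[0,1]^d` in Euclidean space `ℝ^d`. -/
def unitCube (d : ℕ) : Set (EuclideanSpace ℝ (Fin d)) :=
  {x | ∀ i, x i ∈ Set.Icc (0 : ℝ) 1}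

/-- The uniform probability measure on the unit cube `[0,1]^d`
(the cube has Lebesgue measure one, so the restriction of Lebesgue measure
to the cube is the uniform probability measure on it). -/
def unifCube (d : ℕ) : Measure (EuclideanSpace ℝ (Fin d)) :=
  volume.restrict (unitCube d)

/-- `LMBMon X Y A B` is the minimum total Euclidean length of a partial bipartite
matching pairing `min A.card B.card` of the points `X j, j ∈ A` with as many of the
points `Y j, j ∈ B`, each pair consisting of one `X`-point and one `Y`-point. -/
def LMBMon {d N₁ N₂ : ℕ} (X : Fin N₁ → EuclideanSpace ℝ (Fin d))
    (Y : Fin N₂ → EuclideanSpace ℝ (Fin d)) (A : Finset (Fin N₁)) (B : Finset (Fin N₂)) : ℝ :=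
  sInf { s | ∃ (σ : Fin (min A.card B.card) ↪ Fin N₁) (τ : Fin (min A.card B.card) ↪ Fin N₂),
    (∀ i, σ i ∈ A) ∧ (∀ i, τ i ∈ B) ∧ s = ∑ i, dist (X (σ i)) (Y (τ i)) }

/-- `LMBM X Y` : the minimum total Euclidean length of a bipartite matching between the
points of `X` and the points of `Y`; if the two families have different cardinalities
`N₁ ≠ N₂`, it is the minimum length of a partial matching pairing `min N₁ N₂` points of
each family, leaving `|N₁ - N₂|` points unmatched. -/
def LMBM {d N₁ N₂ : ℕ} (X : Fin N₁ → EuclideanSpace ℝ (Fin d))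
    (Y : Fin N₂ → EuclideanSpace ℝ (Fin d)) : ℝ :=
  LMBMon X Y Finset.univ Finset.univ

/-- `MP d lam`: the expected length of a minimum bipartite matching in the Poissonized
model on `[0,1]^d` with intensity `lam`: the numbers `n₁, n₂` of points of the two
families are independent Poisson(lam) variables and the points are i.i.d. uniform
on the cube. -/
def MP (d : ℕ) (lam : ℝ) : ℝ :=
  ∑' n₁ : ℕ, ∑' n₂ : ℕ,
    (Real.exp (-lam) * lam ^ n₁ / n₁.factorial) *
      ((Real.exp (-lam) * lam ^ n₂ / n₂.factorial) *
        ∫ p : (Fin n₁ → EuclideanSpace ℝ (Fin d)) × (Fin n₂ → EuclideanSpace ℝ (Fin d)),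
          LMBM p.1 p.2 ∂ ((Measure.pi fun _ => unifCube d).prod (Measure.pi fun _ => unifCube d)))

end

/-!
Moving one of the `2N` points inside the unit cube moves it by at most `√d`, and by the triangle
inequality the minimum matching length changes by no more than that. McDiarmid's inequality then
makes `L_N - E L_N` sub-Gaussian with variance proxy `2N (√d / 2)²`, and a Chernoff bound at level
`t N^(1 - 1/d)` gives the tail estimate, even with `d` in place of `8d`.

McDiarmid's inequality itself is an induction on the number of independent coordinates. Averaging
over the first coordinate leaves a function of the others with the same bounded differences, while
for fixed values of the others the fluctuation around this average is sub-Gaussian by Hoeffding's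
lemma; variance proxies add.
-/

open scoped NNReal

section Subgaussian

variable {α β : Type*} {mα : MeasurableSpace α} {mβ : MeasurableSpace β} {μ : Measure α}
  {ν : Measure β} {c c' : ℝ≥0}

lemma measure_abs_ge_le_of_hasSubgaussianMGF [IsFiniteMeasure μ] {f : α → ℝ}
    (h : HasSubgaussianMGF f c μ) {ε : ℝ} (hε : 0 ≤ ε) :
    μ {a | ε ≤ |f a|} ≤ ENNReal.ofReal (2 * Real.exp (-ε ^ 2 / (2 * c))) := by
  have h_union : {a | ε ≤ |f a|} = {a | ε ≤ f a} ∪ {a | ε ≤ (-f) a} := by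
    ext a
    exact le_abs (a := ε)
  rw [h_union, ← ofReal_measureReal]
  refine ENNReal.ofReal_le_ofReal ((measureReal_union_le _ _).trans ?_)
  linarith [h.measure_ge_le hε, h.neg.measure_ge_le hε]

lemma hasSubgaussianMGF_comp_sub_integral {f : β → ℝ} {g : α → β} (hg : AEMeasurable g μ)
    (h : HasSubgaussianMGF (fun b ↦ f b - ∫ b', f b' ∂(μ.map g)) c (μ.map g)) :
    HasSubgaussianMGF (fun a ↦ f (g a) - ∫ a', f (g a') ∂μ) c μ := by
  have hf : AEStronglyMeasurable f (μ.map g) := by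
    simpa using h.aestronglyMeasurable.add_const (∫ b', f b' ∂(μ.map g))
  rw [integral_map hg hf] at h
  exact h.of_map hg

lemma integrable_of_hasSubgaussianMGF_sub_const [IsFiniteMeasure μ] {f : α → ℝ} {m : ℝ}
    (h : HasSubgaussianMGF (fun a ↦ f a - m) c μ) : Integrable f μ := by
  simpa only [sub_eq_add_neg, integrable_add_const_iff] using h.integrable

lemma hasSubgaussianMGF_sub_integral_of_abs_sub_le [IsProbabilityMeasure μ] {f : α → ℝ}
    (hf : AEMeasurable f μ) (hc : ∀ a a', |f a - f a'| ≤ c) :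
    HasSubgaussianMGF (fun a ↦ f a - ∫ a', f a' ∂μ) ((c / 2) ^ 2) μ := by
  have : Nonempty α := μ.nonempty_of_neZero
  let a₀ := Classical.arbitrary α
  have h_bdd : BddBelow (Set.range f) :=
    ⟨f a₀ - c, by rintro _ ⟨a, rfl⟩; linarith [(abs_le.1 (hc a a₀)).1]⟩
  have h_mem : ∀ a, f a ∈ Set.Icc (⨅ a', f a') ((⨅ a', f a') + c) := fun a ↦
    ⟨ciInf_le h_bdd a, sub_le_iff_le_add.1 (le_ciInf fun a' ↦ by linarith [(abs_le.1 (hc a a')).2])⟩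
  simpa using hasSubgaussianMGF_of_mem_Icc hf (ae_of_all μ h_mem)

lemma hasSubgaussianMGF_prod [SFinite μ] [SFinite ν] {f : α × β → ℝ} {g : β → ℝ}
    (hf : AEStronglyMeasurable f (μ.prod ν))
    (hfg : ∀ᵐ b ∂ν, HasSubgaussianMGF (fun a ↦ f (a, b) - g b) c μ)
    (hg : HasSubgaussianMGF g c' ν) :
    HasSubgaussianMGF f (c + c') (μ.prod ν) := by
  have h_split (t : ℝ) (a : α) (b : β) :
      Real.exp (t * f (a, b)) = Real.exp (t * (f (a, b) - g b)) * Real.exp (t * g b) := by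
    rw [← Real.exp_add]
    ring_nf
  have h_inner (t : ℝ) : ∀ᵐ b ∂ν, ∫ a, Real.exp (t * f (a, b)) ∂μ
      ≤ Real.exp (c * t ^ 2 / 2) * Real.exp (t * g b) := by
    filter_upwards [hfg] with b hb
    simp_rw [h_split, integral_mul_const]
    gcongr
    exact hb.mgf_le t
  have h_int (t : ℝ) : Integrable (fun p ↦ Real.exp (t * f p)) (μ.prod ν) := by
    have h_meas : AEStronglyMeasurable (fun p ↦ Real.exp (t * f p)) (μ.prod ν) := by fun_prop
    refine (integrable_prod_iff' h_meas).2 ⟨?_, ?_⟩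
    · filter_upwards [hfg] with b hb
      simp_rw [h_split]
      exact (hb.integrable_exp_mul t).mul_const _
    · simp_rw [Real.norm_eq_abs, Real.abs_exp]
      refine ((hg.integrable_exp_mul t).const_mul (Real.exp (c * t ^ 2 / 2))).mono'
        h_meas.prod_swap.integral_prod_right' ?_
      filter_upwards [h_inner t] with b hb
      rwa [Real.norm_of_nonneg (by positivity)]
  refine ⟨h_int, fun t ↦ ?_⟩
  calc ∫ p, Real.exp (t * f p) ∂(μ.prod ν)
      = ∫ b, ∫ a, Real.exp (t * f (a, b)) ∂μ ∂ν := integral_prod_symm _ (h_int t)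
    _ ≤ ∫ b, Real.exp (c * t ^ 2 / 2) * Real.exp (t * g b) ∂ν :=
      integral_mono_ae (h_int t).integral_prod_right ((hg.integrable_exp_mul t).const_mul _)
        (h_inner t)
    _ = Real.exp (c * t ^ 2 / 2) * mgf g ν t := integral_const_mul _ _
    _ ≤ Real.exp (c * t ^ 2 / 2) * Real.exp (c' * t ^ 2 / 2) := by
      gcongr
      exact hg.mgf_le t
    _ = Real.exp ((c + c' : ℝ≥0) * t ^ 2 / 2) := by
      rw [← Real.exp_add]
      push_cast
      ring_nf

lemma hasSubgaussianMGF_prod_sub_integral [IsProbabilityMeasure μ] [IsFiniteMeasure ν]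
    {f : α × β → ℝ} (hf : AEStronglyMeasurable f (μ.prod ν))
    (h_fst : ∀ᵐ b ∂ν, HasSubgaussianMGF (fun a ↦ f (a, b) - ∫ a', f (a', b) ∂μ) c μ)
    (h_snd : HasSubgaussianMGF
      (fun b ↦ ∫ a, f (a, b) ∂μ - ∫ b', ∫ a, f (a, b') ∂μ ∂ν) c' ν) :
    HasSubgaussianMGF (fun p ↦ f p - ∫ p', f p' ∂(μ.prod ν)) (c + c') (μ.prod ν) := by
  set m := ∫ b, ∫ a, f (a, b) ∂μ ∂ν
  have h_sub : HasSubgaussianMGF (fun p ↦ f p - m) (c + c') (μ.prod ν) :=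
    hasSubgaussianMGF_prod (hf.sub aestronglyMeasurable_const) (by simpa using h_fst) h_snd
  rwa [integral_prod_symm f (integrable_of_hasSubgaussianMGF_sub_const h_sub)]

end Subgaussian

section BoundedDifferences

variable {ι κ : Type*} {E : ι → Type*}

/-- Changing the `i`-th coordinate of a point of `s`, without leaving `s`, changes the value of `F`
by at most `c i`. This is the hypothesis of McDiarmid's inequality; the set `s`
allows for functions that are controlled only on the support of the random variables. -/
def HasBoundedDifferencesOn (F : (∀ i, E i) → ℝ) (c : ι → ℝ≥0) (s : Set (∀ i, E i)) : Prop :=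
  ∀ ⦃i x⦄, x ∈ s → ∀ ⦃y⦄, y ∈ s → (∀ j, j ≠ i → x j = y j) → |F x - F y| ≤ c i

namespace HasBoundedDifferencesOn

variable {F : (∀ i, E i) → ℝ} {c : ι → ℝ≥0} {s : Set (∀ i, E i)}

lemma comp {E' : κ → Type*} {g : (∀ k, E' k) → ∀ i, E i} {σ : κ → ι}
    (h : HasBoundedDifferencesOn F c s) {s' : Set (∀ k, E' k)} (hs : Set.MapsTo g s' s)
    (hg : ∀ ⦃k x y⦄, (∀ l, l ≠ k → x l = y l) → ∀ j, j ≠ σ k → g x j = g y j) :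
    HasBoundedDifferencesOn (F ∘ g) (c ∘ σ) s' :=
  fun _ _ hx _ hy hxy ↦ h (hs hx) (hs hy) (hg hxy)

lemma integral {β : Type*} {mβ : MeasurableSpace β} {ν : Measure β} [IsProbabilityMeasure ν]
    {G : (∀ i, E i) → β → ℝ} (h : ∀ b, HasBoundedDifferencesOn (G · b) c s)
    (hG : ∀ x, Integrable (G x) ν) :
    HasBoundedDifferencesOn (fun x ↦ ∫ b, G x b ∂ν) c s := by
  intro i x hx y hy hxy
  rw [← integral_sub (hG x) (hG y)]
  have h_le : ∀ b, ‖G x b - G y b‖ ≤ c i := fun b ↦ h b hx hy hxy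
  simpa using norm_integral_le_of_norm_le_const (ae_of_all ν h_le)

lemma hasSubgaussianMGF_pi_fin {n : ℕ} {E : Fin n → Type*} [∀ i, MeasurableSpace (E i)]
    {μ : ∀ i, Measure (E i)} [∀ i, IsProbabilityMeasure (μ i)] {F : (∀ i, E i) → ℝ}
    {c : Fin n → ℝ≥0} (h : HasBoundedDifferencesOn F c Set.univ) (hF : Measurable F) :
    HasSubgaussianMGF (fun x ↦ F x - ∫ y, F y ∂(Measure.pi μ)) (∑ i, (c i / 2) ^ 2)
      (Measure.pi μ) := by
  induction n with
  | zero =>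
    have h_const (x) : F x = F default := congrArg F (Subsingleton.elim x default)
    simp [h_const]
  | succ n ih =>
    let e : (∀ i, E i) ≃ᵐ E 0 × (∀ i : Fin n, E i.succ) := MeasurableEquiv.piFinSuccAbove E 0
    let G : E 0 × (∀ i : Fin n, E i.succ) → ℝ := F ∘ e.symm
    have hG : Measurable G := hF.comp e.symm.measurable
    have h_head (x) (a a' : E 0) : |G (a, x) - G (a', x)| ≤ c 0 := by
      refine h trivial trivial fun j hj ↦ ?_
      obtain ⟨j, rfl⟩ := Fin.exists_succ_eq.2 hj
      rfl
    have h_tail (a) : HasBoundedDifferencesOn (fun x ↦ G (a, x)) (fun i ↦ c i.succ) Set.univ := by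
      refine h.comp (Set.mapsTo_univ _ _) fun i x y hxy j ↦ ?_
      refine Fin.cases (fun _ ↦ rfl) (fun k hk ↦ ?_) j
      exact hxy k (ne_of_apply_ne Fin.succ hk)
    have h_sub (x) : HasSubgaussianMGF (fun a ↦ G (a, x) - ∫ a', G (a', x) ∂(μ 0))
        ((c 0 / 2) ^ 2) (μ 0) :=
      hasSubgaussianMGF_sub_integral_of_abs_sub_le (by fun_prop) (h_head x)
    have h_mean := ih (μ := fun i ↦ μ i.succ)
      (integral h_tail fun x ↦ integrable_of_hasSubgaussianMGF_sub_const (h_sub x))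
      hG.stronglyMeasurable.integral_prod_left'.measurable
    have h_prod := hasSubgaussianMGF_prod_sub_integral hG.aestronglyMeasurable
      (ae_of_all _ h_sub) h_mean
    have h_pres : MeasurePreserving e (Measure.pi μ) ((μ 0).prod (Measure.pi fun i ↦ μ i.succ)) :=
      measurePreserving_piFinSuccAbove μ 0
    rw [← h_pres.map_eq] at h_prod
    have h_comp := hasSubgaussianMGF_comp_sub_integral h_pres.aemeasurable h_prod
    have hGe (x) : G (e x) = F x := congrArg F (e.symm_apply_apply x)
    simpa only [hGe, Fin.sum_univ_succ] using h_comp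

lemma hasSubgaussianMGF_pi [Fintype ι] [∀ i, MeasurableSpace (E i)]
    {μ : ∀ i, Measure (E i)} [∀ i, IsProbabilityMeasure (μ i)]
    (h : HasBoundedDifferencesOn F c Set.univ) (hF : Measurable F) :
    HasSubgaussianMGF (fun x ↦ F x - ∫ y, F y ∂(Measure.pi μ)) (∑ i, (c i / 2) ^ 2)
      (Measure.pi μ) := by
  let σ := (Fintype.equivFin ι).symm
  let e := MeasurableEquiv.piCongrLeft E σ
  have h_fin : HasBoundedDifferencesOn (F ∘ e) (c ∘ σ) Set.univ := by
    refine h.comp (Set.mapsTo_univ _ _) fun k x y hxy j hj ↦ ?_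
    obtain ⟨l, rfl⟩ := σ.surjective j
    simpa [e, MeasurableEquiv.coe_piCongrLeft, Equiv.piCongrLeft_apply_apply]
      using hxy l (ne_of_apply_ne σ hj)
  have h_pres := (measurePreserving_piCongrLeft μ σ).symm
  have h_sub := hasSubgaussianMGF_pi_fin (μ := fun k ↦ μ (σ k)) h_fin (by fun_prop)
  rw [← h_pres.map_eq] at h_sub
  have h_comp := hasSubgaussianMGF_comp_sub_integral h_pres.aemeasurable h_sub
  simpa [e, σ.sum_comp fun i ↦ (c i / 2) ^ 2] using h_comp

/-- McDiarmid's inequality. -/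
theorem hasSubgaussianMGF_of_iIndepFun [Fintype ι] [∀ i, MeasurableSpace (E i)] {Ω : Type*}
    {mΩ : MeasurableSpace Ω} {P : Measure Ω} {Z : ∀ i, Ω → E i} {S : ∀ i, Set (E i)}
    (h : HasBoundedDifferencesOn F c (Set.univ.pi S)) (hF : Measurable F)
    (hS : ∀ i, MeasurableSet (S i)) (h_indep : iIndepFun Z P) (hZ : ∀ i, AEMeasurable (Z i) P)
    (hZS : ∀ i, ∀ᵐ ω ∂P, Z i ω ∈ S i) :
    HasSubgaussianMGF (fun ω ↦ F (Z · ω) - ∫ ω', F (Z · ω') ∂P) (∑ i, (c i / 2) ^ 2) P := by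
  have := h_indep.isProbabilityMeasure
  have h_map (i : ι) : IsProbabilityMeasure (P.map (Z i)) :=
    Measure.isProbabilityMeasure_map (hZ i)
  have h_nonempty (i : ι) : (S i).Nonempty :=
    let ⟨ω, hω⟩ := (hZS i).exists
    ⟨Z i ω, hω⟩
  -- Composing `F` with a measurable retraction of `E i` onto `S i` makes the differences bounded
  -- everywhere and changes `F (Z · ω)` only on a null set.
  choose r hr hrS using fun i ↦ (hS i).exists_measurable_proj (h_nonempty i)
  have h_univ : HasBoundedDifferencesOn (fun x ↦ F fun i ↦ r i (x i)) c Set.univ :=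
    h.comp (σ := id) (fun x _ i _ ↦ (r i (x i)).2) fun k x y hxy j hj ↦ by rw [hxy j hj]
  have h_pi := hasSubgaussianMGF_pi (μ := fun i ↦ P.map (Z i)) h_univ (by fun_prop)
  rw [← h_indep.map_fun_eq_pi_map hZ] at h_pi
  have h_sub := hasSubgaussianMGF_comp_sub_integral (aemeasurable_pi_lambda _ hZ) h_pi
  have h_ae : (fun ω ↦ F fun i ↦ r i (Z i ω)) =ᵐ[P] fun ω ↦ F (Z · ω) := by
    filter_upwards [ae_all_iff.2 hZS] with ω hω
    exact congrArg F (funext fun i ↦ congrArg Subtype.val (hrS i ⟨_, hω i⟩))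
  rw [integral_congr_ae h_ae] at h_sub
  exact h_sub.congr (h_ae.sub ae_eq_rfl)

end HasBoundedDifferencesOn

end BoundedDifferences

section Matching

variable {d N₁ N₂ : ℕ}

lemma LMBMon_le_add_sum_dist (X X' : Fin N₁ → EuclideanSpace ℝ (Fin d))
    (Y Y' : Fin N₂ → EuclideanSpace ℝ (Fin d)) (A : Finset (Fin N₁)) (B : Finset (Fin N₂)) :
    LMBMon X Y A B
      ≤ LMBMon X' Y' A B + (∑ i ∈ A, dist (X i) (X' i) + ∑ j ∈ B, dist (Y j) (Y' j)) := by
  have h_sum {n N : ℕ} (ρ : Fin n ↪ Fin N) {C : Finset (Fin N)} (hρ : ∀ i, ρ i ∈ C)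
      (Z Z' : Fin N → EuclideanSpace ℝ (Fin d)) :
      ∑ i, dist (Z (ρ i)) (Z' (ρ i)) ≤ ∑ j ∈ C, dist (Z j) (Z' j) := by
    rw [← Finset.sum_map Finset.univ ρ fun j ↦ dist (Z j) (Z' j)]
    exact Finset.sum_le_sum_of_subset_of_nonneg (by simpa [Finset.subset_iff] using hρ)
      fun _ _ _ ↦ dist_nonneg
  rw [← sub_le_iff_le_add]
  refine le_csInf ⟨_, (A.orderEmbOfCardLe (min_le_left _ _)).toEmbedding,
    (B.orderEmbOfCardLe (min_le_right _ _)).toEmbedding, A.orderEmbOfCardLe_mem _,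
    B.orderEmbOfCardLe_mem _, rfl⟩ ?_
  rintro _ ⟨σ, τ, hσ, hτ, rfl⟩
  rw [sub_le_iff_le_add]
  calc LMBMon X Y A B
      ≤ ∑ i, dist (X (σ i)) (Y (τ i)) := by
        refine csInf_le ⟨0, ?_⟩ ⟨σ, τ, hσ, hτ, rfl⟩
        rintro _ ⟨σ', τ', -, -, rfl⟩
        positivity
    _ ≤ ∑ i, (dist (X' (σ i)) (Y' (τ i))
          + (dist (X (σ i)) (X' (σ i)) + dist (Y (τ i)) (Y' (τ i)))) := by
        refine Finset.sum_le_sum fun i _ ↦ ?_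
        linarith [dist_triangle4 (X (σ i)) (X' (σ i)) (Y' (τ i)) (Y (τ i)),
          dist_comm (Y' (τ i)) (Y (τ i))]
    _ ≤ ∑ i, dist (X' (σ i)) (Y' (τ i))
          + (∑ i ∈ A, dist (X i) (X' i) + ∑ j ∈ B, dist (Y j) (Y' j)) := by
        rw [Finset.sum_add_distrib, Finset.sum_add_distrib]
        gcongr
        exacts [h_sum σ hσ X X', h_sum τ hτ Y Y']

lemma LMBM_le_add_sum_dist (Z Z' : Fin N₁ ⊕ Fin N₂ → EuclideanSpace ℝ (Fin d)) :
    LMBM (Z ∘ Sum.inl) (Z ∘ Sum.inr)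
      ≤ LMBM (Z' ∘ Sum.inl) (Z' ∘ Sum.inr) + ∑ k, dist (Z k) (Z' k) := by
  rw [Fintype.sum_sum_type]
  exact LMBMon_le_add_sum_dist _ _ _ _ _ _

lemma measurable_LMBM : Measurable fun Z : Fin N₁ ⊕ Fin N₂ → EuclideanSpace ℝ (Fin d) ↦
    LMBM (Z ∘ Sum.inl) (Z ∘ Sum.inr) := by
  refine (LipschitzWith.of_le_add_mul (Fintype.card (Fin N₁ ⊕ Fin N₂)) fun Z Z' ↦
    (LMBM_le_add_sum_dist Z Z').trans ?_).continuous.measurable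
  gcongr
  simpa using Finset.sum_le_card_nsmul Finset.univ _ _ fun k _ ↦ dist_le_pi_dist Z Z' k

lemma hasBoundedDifferencesOn_LMBM {S : Set (EuclideanSpace ℝ (Fin d))} {D : ℝ≥0}
    (hS : ∀ x ∈ S, ∀ y ∈ S, dist x y ≤ D) :
    HasBoundedDifferencesOn
      (fun Z : Fin N₁ ⊕ Fin N₂ → EuclideanSpace ℝ (Fin d) ↦ LMBM (Z ∘ Sum.inl) (Z ∘ Sum.inr))
      (fun _ ↦ D) (Set.univ.pi fun _ ↦ S) := by
  intro k Z hZ Z' hZ' hk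
  have h_sum : ∑ l, dist (Z l) (Z' l) ≤ D := by
    rw [Finset.sum_eq_single k (fun l _ hl ↦ by rw [hk l hl, dist_self]) (by simp)]
    exact hS _ (hZ k trivial) _ (hZ' k trivial)
  have h_le := LMBM_le_add_sum_dist Z Z'
  have h_ge := LMBM_le_add_sum_dist Z' Z
  simp_rw [dist_comm (Z' _)] at h_ge
  rw [abs_sub_le_iff]
  constructor <;> linarith

theorem hasSubgaussianMGF_LMBM {Ω : Type*} {mΩ : MeasurableSpace Ω} {P : Measure Ω}
    {X : Fin N₁ → Ω → EuclideanSpace ℝ (Fin d)} {Y : Fin N₂ → Ω → EuclideanSpace ℝ (Fin d)}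
    {S : Set (EuclideanSpace ℝ (Fin d))} {D : ℝ≥0} (hS : MeasurableSet S)
    (hD : ∀ x ∈ S, ∀ y ∈ S, dist x y ≤ D) (h_meas : ∀ k, AEMeasurable (Sum.elim X Y k) P)
    (h_indep : iIndepFun (Sum.elim X Y) P) (h_mem : ∀ k, ∀ᵐ ω ∂P, Sum.elim X Y k ω ∈ S) :
    HasSubgaussianMGF (fun ω ↦ LMBM (X · ω) (Y · ω) - ∫ ω', LMBM (X · ω') (Y · ω') ∂P)
      ((N₁ + N₂) * (D / 2) ^ 2) P := by
  simpa [Function.comp_def] using! (hasBoundedDifferencesOn_LMBM hD).hasSubgaussianMGF_of_iIndepFun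
    measurable_LMBM (fun _ ↦ hS) h_indep h_meas h_mem

end Matching

section UnitCube

variable {d : ℕ}

lemma measurableSet_unitCube : MeasurableSet (unitCube d) := by
  have h_eq : unitCube d = ⋂ i, {x | x i ∈ Set.Icc (0 : ℝ) 1} := by
    ext x
    simp [unitCube]
  rw [h_eq]
  exact MeasurableSet.iInter fun i ↦ measurableSet_Icc.preimage (by fun_prop)

lemma dist_le_sqrt_of_mem_unitCube {x y : EuclideanSpace ℝ (Fin d)} (hx : x ∈ unitCube d)
    (hy : y ∈ unitCube d) : dist x y ≤ √d := by
  rw [EuclideanSpace.dist_eq]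
  gcongr
  calc ∑ i, dist (x i) (y i) ^ 2
      ≤ ∑ _i : Fin d, (1 : ℝ) := by
        gcongr with i
        exact pow_le_one₀ dist_nonneg (by simpa using Real.dist_le_of_mem_Icc (hx i) (hy i))
    _ = d := by simp

lemma ae_mem_unitCube_of_map_eq_unifCube {Ω : Type*} {_ : MeasurableSpace Ω} {P : Measure Ω}
    {Z : Ω → EuclideanSpace ℝ (Fin d)} (hZ : AEMeasurable Z P) (h : P.map Z = unifCube d) :
    ∀ᵐ ω ∂P, Z ω ∈ unitCube d :=
  ae_of_ae_map hZ (h ▸ ae_restrict_mem measurableSet_unitCube)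

end UnitCube

theorem concentration_MBM_general {d N : ℕ} (hd : 1 ≤ d) (hN : 1 ≤ N) {Ω : Type*}
    {mΩ : MeasurableSpace Ω} {P : Measure Ω} {X Y : Fin N → Ω → EuclideanSpace ℝ (Fin d)}
    (h_meas : ∀ k, AEMeasurable (Sum.elim X Y k) P) (h_indep : iIndepFun (Sum.elim X Y) P)
    (h_mem : ∀ k, ∀ᵐ ω ∂P, Sum.elim X Y k ω ∈ unitCube d) {t : ℝ} (ht : 0 < t) :
    P {ω | |LMBM (X · ω) (Y · ω) / (N : ℝ) ^ (1 - 1 / (d : ℝ)) -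
            ∫ ω', LMBM (X · ω') (Y · ω') / (N : ℝ) ^ (1 - 1 / (d : ℝ)) ∂P| > t}
      ≤ ENNReal.ofReal (2 * Real.exp (-((N : ℝ) ^ (1 - 2 / (d : ℝ)) * t ^ 2) / d)) := by
  have := h_indep.isProbabilityMeasure
  have hN' : (0 : ℝ) < N := by exact_mod_cast hN
  have hd' : (0 : ℝ) < d := by exact_mod_cast hd
  set R := (N : ℝ) ^ (1 - 1 / (d : ℝ)) with hR
  have hR_pos : 0 < R := by positivity
  have hR_sq : R ^ 2 = N * (N : ℝ) ^ (1 - 2 / (d : ℝ)) := by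
    calc R ^ 2
        = (N : ℝ) ^ (1 + (1 - 2 / (d : ℝ))) := by
          rw [hR, ← Real.rpow_mul_natCast hN'.le]
          congr 1
          push_cast
          ring
      _ = N * (N : ℝ) ^ (1 - 2 / (d : ℝ)) := by rw [Real.rpow_add hN', Real.rpow_one]
  have h_sub := hasSubgaussianMGF_LMBM (D := NNReal.sqrt d) measurableSet_unitCube
    (fun x hx y hy ↦ by simpa using dist_le_sqrt_of_mem_unitCube hx hy) h_meas h_indep h_mem
  calc
    _ ≤ P {ω | t * R ≤ |LMBM (X · ω) (Y · ω) - ∫ ω', LMBM (X · ω') (Y · ω') ∂P|} := by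
        refine measure_mono fun ω hω ↦ ?_
        rw [Set.mem_ofPred_eq, integral_div, ← sub_div, abs_div, abs_of_pos hR_pos, gt_iff_lt,
          lt_div_iff₀ hR_pos] at hω
        exact hω.le
    _ ≤ _ := measure_abs_ge_le_of_hasSubgaussianMGF h_sub (by positivity)
    _ = _ := by
        congr 3
        push_cast
        rw [mul_pow, hR_sq, div_pow, Real.sq_sqrt hd'.le,
          div_eq_div_iff (by positivity) hd'.ne']
        ring

theorem concentration_MBM
    (d N : ℕ) (hd : 1 ≤ d) (hN : 1 ≤ N)
    (Ω : Type*) [MeasureSpace Ω] [IsProbabilityMeasure (ℙ : Measure Ω)]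
    (X Y : Fin N → Ω → EuclideanSpace ℝ (Fin d))
    (hmeas : ∀ n, Measurable (Sum.elim X Y n))
    (hindep : iIndepFun (Sum.elim X Y) ℙ)
    (hunif : ∀ n, Measure.map (Sum.elim X Y n) ℙ = unifCube d)
    (t : ℝ) (ht : 0 < t) :
    ℙ {ω | |LMBM (fun i => X i ω) (fun j => Y j ω) / (N : ℝ) ^ (1 - 1 / (d : ℝ)) -
            ∫ ω', LMBM (fun i => X i ω') (fun j => Y j ω') / (N : ℝ) ^ (1 - 1 / (d : ℝ)) ∂ℙ| > t}
      ≤ ENNReal.ofReal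
          (2 * Real.exp (-((N : ℝ) ^ (1 - 2 / (d : ℝ)) * t ^ 2) / (8 * d))) := by
  refine (concentration_MBM_general hd hN (fun n ↦ (hmeas n).aemeasurable) hindep
    (fun n ↦ ae_mem_unitCube_of_map_eq_unifCube (hmeas n).aemeasurable (hunif n)) ht).trans ?_
  simp only [neg_div]
  gcongr
  linarith [d.cast_nonneg (α := ℝ)]
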